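/- Let G be a non-amenable residually finite countable group and (Z,G) any minimal equicontinuous Cantor system with a free orbit. Then there exists a Toeplitz G-subshift with no G-invariant Borel probability measures whose maximal equicontinuous factor is (Z,G). -/

import Mathlib

open MeasureTheory

/-- The shift action of `G` on `G → A`: `(g • y)(h) = y(g⁻¹h)`. -/
def shiftAct {G A : Type*} [Group G] (g : G) (y : G → A) : G → A :=
  fun h => y (g⁻¹ * h)

/-- A Toeplitz element: every coordinate is periodic with respect to some finite index
subgroup. -/
def IsToeplitz {G A : Type*} [Group G] (x : G → A) : Prop :=
  ∀ g : G, ∃ Γ : Subgroup G, Γ.FiniteIndex ∧ ∀ γ ∈ Γ, x (γ⁻¹ * g) = x g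

/-- The orbit closure of `x` under the shift action. -/
def orbitClosure {G A : Type*} [Group G] [TopologicalSpace A] (x : G → A) :
    Set (G → A) :=
  closure {y : G → A | ∃ g : G, y = shiftAct g x}

/-- Amenability of a countable group, characterized dynamically. -/
def HasInvariantMeasuresAll (G : Type*) [Group G] : Prop :=
  ∀ (X : Type) [MetricSpace X] [CompactSpace X] [Nonempty X]
    [MeasurableSpace X] [BorelSpace X] (act : G → X → X),
    (∀ g : G, Continuous (act g)) → act 1 = id →
    (∀ g h : G, act (g * h) = act g ∘ act h) →
    ∃ μ : Measure X, IsProbabilityMeasure μ ∧ ∀ g : G, Measure.map (act g) μ = μ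

/-!
Since `G` is not amenable, Følner's condition fails strongly: some finite `K` satisfies
`3 * |A| ≤ |A * K⁻¹|` for all finite `A`, so Hall's theorem yields maps `d : G → K` for which every
`h : G` equals `g * d g` for at least two `g`. This is a local rule, hence it persists on the whole
orbit closure of `d`, and an invariant probability measure there would contradict mass transport:
every point sends out mass one and receives mass two.

The map `d` can be made Toeplitz, with periods among the return times of a free point `z₀ : Z`.
Values are frozen one after the other along sparse cosets of small subgroups, and each freezing is
compensated by the slack between the factors three and two.

Finally `d` is paired with `g ↦ ψ (g⁻¹ • z₀)`, where `ψ : Z → Bool` is continuous except at a point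
`z₁` outside the orbit of `z₀`, near which it takes both values. The discontinuity makes this
itinerary separate the points of `Z`, so that the orbit closure of the pair maps onto `Z`, with a
single point above `z₀`. By distality of equicontinuous systems, a single one-point fibre forces
every equicontinuous factor to factor through `Z`.
-/

section Matching

open Finset

variable {ι α : Type*}

/-- A finite set `A` is linked for the relation `r` if no proper nonempty part of `A` is cut off
from the rest: connectedness of `A` in the directed graph `r`. -/
def IsLinked (r : ι → ι → Prop) (A : Finset ι) : Prop :=
  ∀ B ⊆ A, B.Nonempty → B ≠ A → ∃ b ∈ B, ∃ a ∈ A, a ∉ B ∧ r b a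

theorem mul_card_le_card_biUnion_of_isLinked [DecidableEq α] {N : ι → Finset α}
    {r : ι → ι → Prop} (hr : ∀ a b, ¬ Disjoint (N a) (N b) → r a b) {c : ℕ}
    (h : ∀ A, IsLinked r A → c * #A ≤ #(A.biUnion N)) (A : Finset ι) :
    c * #A ≤ #(A.biUnion N) := by
  classical
  induction A using Finset.strongInduction with
  | H A ih =>
    by_cases hA : IsLinked r A
    · exact h A hA
    simp only [IsLinked] at hA
    push Not at hA
    obtain ⟨B, hBA, hB, hne, hcut⟩ := hA
    have hdisj : Disjoint (B.biUnion N) ((A \ B).biUnion N) := by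
      simp only [disjoint_biUnion_left, disjoint_biUnion_right, mem_sdiff]
      intro a ha b hb
      by_contra hab
      exact hcut b hb a ha.1 ha.2 (hr b a hab)
    have hunion : A.biUnion N = B.biUnion N ∪ (A \ B).biUnion N := by
      rw [← union_biUnion, union_sdiff_of_subset hBA]
    calc c * #A = c * #B + c * #(A \ B) := by
          rw [← mul_add, add_comm, card_sdiff_add_card_eq_card hBA]
      _ ≤ #(B.biUnion N) + #((A \ B).biUnion N) :=
          Nat.add_le_add (ih B (hBA.ssubset_of_ne hne)) (ih _ (sdiff_ssubset hBA hB))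
      _ = #(A.biUnion N) := by rw [hunion, card_union_of_disjoint hdisj]

theorem exists_injective_mem_of_mul_card_le_card_biUnion [DecidableEq α]
    {N : ι → Finset α} {c : ℕ} (h : ∀ A : Finset ι, c * #A ≤ #(A.biUnion N)) :
    ∃ φ : ι × Fin c → α, φ.Injective ∧ ∀ p, φ p ∈ N p.1 := by
  classical
  refine (all_card_le_biUnion_card_iff_exists_injective fun p : ι × Fin c ↦ N p.1).1 fun A ↦ ?_
  calc #A ≤ #(A.image Prod.fst ×ˢ (univ : Finset (Fin c))) :=
        card_le_card fun p hp ↦ by simpa using ⟨p.2, hp⟩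
    _ = c * #(A.image Prod.fst) := by rw [card_product, card_fin, mul_comm]
    _ ≤ #((A.image Prod.fst).biUnion N) := h _
    _ = #(A.biUnion fun p ↦ N p.1) := by rw [image_biUnion]

end Matching

section LinkedInGroup

open Finset
open scoped Pointwise

variable {G : Type*} [Group G] [DecidableEq G] {L A : Finset G}

theorem IsLinked.filter_mem_pow_eq_or_lt_card (hL : 1 ∈ L)
    (hA : IsLinked (fun b a ↦ b⁻¹ * a ∈ L) A) {a : G} (ha : a ∈ A) (j : ℕ) :
    {b ∈ A | a⁻¹ * b ∈ L ^ j} = A ∨ j < #{b ∈ A | a⁻¹ * b ∈ L ^ j} := by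
  induction j with
  | zero => exact .inr (card_pos.2 ⟨a, by simp [ha]⟩)
  | succ j ih =>
    set B := {b ∈ A | a⁻¹ * b ∈ L ^ j}
    set B' := {b ∈ A | a⁻¹ * b ∈ L ^ (j + 1)}
    have hBB' : B ⊆ B' := monotone_filter_right A fun b _ hb ↦
      pow_subset_pow_right hL j.le_succ hb
    rcases ih with hB | hcard
    · exact .inl ((filter_subset _ _).antisymm (hB.ge.trans hBB'))
    by_cases hB : B = A
    · exact .inl ((filter_subset _ _).antisymm (hB.ge.trans hBB'))
    obtain ⟨b, hb, b', hb', hb'B, hbb'⟩ := hA B (filter_subset _ _) (card_pos.1 (by omega)) hB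
    have hb'B' : b' ∈ B' := mem_filter.2 ⟨hb', by
      simpa [pow_succ, mul_assoc] using mul_mem_mul (mem_filter.1 hb).2 hbb'⟩
    exact .inr (Nat.lt_of_le_of_lt hcard
      (card_lt_card (hBB'.ssubset_of_ne fun h ↦ hb'B (h ▸ hb'B'))))

theorem IsLinked.card_le_one_or_mul_card_le {ι : Type*} (hL : 1 ∈ L)
    (hA : IsLinked (fun b a ↦ b⁻¹ * a ∈ L) A) {Q : Finset ι} {f : ι → G} {ρ : ℕ}
    (hf : ∀ p ∈ Q, f p ∈ A)
    (hsep : (Q : Set ι).Pairwise fun p q ↦ (f p)⁻¹ * f q ∉ L ^ ρ * (L ^ ρ)⁻¹) :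
    #Q ≤ 1 ∨ (ρ + 1) * #Q ≤ #A := by
  refine or_iff_not_imp_left.2 fun hQ ↦ ?_
  rw [not_le, one_lt_card_iff_nontrivial] at hQ
  let ball (p : ι) : Finset G := {b ∈ A | (f p)⁻¹ * b ∈ L ^ ρ}
  have hball : ∀ p ∈ Q, ρ + 1 ≤ #(ball p) := by
    intro p hp
    refine (hA.filter_mem_pow_eq_or_lt_card hL (hf p hp) ρ).resolve_left fun hall ↦ ?_
    obtain ⟨q, hq, hqp⟩ := hQ.exists_ne p
    have hmem : (f p)⁻¹ * f q ∈ L ^ ρ := (mem_filter.1 (hall.ge (hf q hq))).2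
    exact hsep hp hq hqp.symm
      (by simpa using mul_mem_mul hmem (inv_mem_inv (one_mem_pow (n := ρ) hL)))
  have hdisj : (Q : Set ι).PairwiseDisjoint ball := by
    intro p hp q hq hpq
    refine disjoint_left.2 fun b hbp hbq ↦ hsep hp hq hpq ?_
    have := mul_mem_mul (mem_filter.1 hbp).2 (inv_mem_inv (mem_filter.1 hbq).2)
    simpa [mul_assoc] using this
  calc (ρ + 1) * #Q = ∑ _p ∈ Q, (ρ + 1) := by simp [mul_comm]
    _ ≤ ∑ p ∈ Q, #(ball p) := sum_le_sum hball
    _ = #(Q.biUnion ball) := (card_biUnion hdisj).symm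
    _ ≤ #A := card_le_card (biUnion_subset.2 fun p _ ↦ filter_subset _ _)

end LinkedInGroup

section Pin

variable {G : Type*} [Group G] {S : G → Finset G} {Γ : Subgroup G} {g k a : G}

open Classical in
/-- The displacement system obtained from `S` by allowing only `k` on the coset `Γ g`. -/
noncomputable def pin (S : G → Finset G) (Γ : Subgroup G) (g k : G) (a : G) : Finset G :=
  if a * g⁻¹ ∈ Γ then {k} else S a

theorem pin_of_mem (ha : a * g⁻¹ ∈ Γ) : pin S Γ g k a = {k} := if_pos ha

theorem pin_of_notMem (ha : a * g⁻¹ ∉ Γ) : pin S Γ g k a = S a := if_neg ha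

theorem pin_self : pin S Γ g k g = {k} := pin_of_mem (by simp)

theorem shiftAct_pin {γ : G} (hγ : γ ∈ Γ) (hS : shiftAct γ S = S) :
    shiftAct γ (pin S Γ g k) = pin S Γ g k := by
  funext a
  have hmem : γ⁻¹ * a * g⁻¹ ∈ Γ ↔ a * g⁻¹ ∈ Γ := by
    rw [mul_assoc, Γ.mul_mem_cancel_left (Γ.inv_mem hγ)]
  by_cases ha : a * g⁻¹ ∈ Γ
  · rw [shiftAct, pin_of_mem ha, pin_of_mem (hmem.2 ha)]
  · rw [shiftAct, pin_of_notMem ha, pin_of_notMem (mt hmem.1 ha)]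
    exact congrFun hS a

theorem pin_subset (hk : k ∈ S g) (hS : ∀ γ ∈ Γ, shiftAct γ S = S) (a : G) :
    pin S Γ g k a ⊆ S a := by
  by_cases ha : a * g⁻¹ ∈ Γ
  · have hSa : S a = S g := by
      have := congrFun (hS _ ha) a
      rwa [shiftAct, mul_inv_rev, inv_inv, inv_mul_cancel_right, eq_comm] at this
    rw [pin_of_mem ha, Finset.singleton_subset_iff, hSa]
    exact hk
  · rw [pin_of_notMem ha]

end Pin

section DoublingSystem

open Finset
open scoped Pointwise

variable {G : Type*} [Group G] [DecidableEq G] {K : Finset G} {S : G → Finset G}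

/-- Read `S g` as the set of displacements allowed at `g`, all of them in the finite set `K`.
These are the points from which some allowed displacement leads to `a`. -/
def sources (K : Finset G) (S : G → Finset G) (a : G) : Finset G :=
  {g ∈ a • K⁻¹ | g⁻¹ * a ∈ S g}

theorem mem_sources (hS : ∀ g, S g ⊆ K) {a g : G} : g ∈ sources K S a ↔ g⁻¹ * a ∈ S g := by
  simp only [sources, mem_filter, ← inv_smul_mem_iff, mem_inv', smul_eq_mul, mul_inv_rev, inv_inv]
  exact and_iff_right_of_imp fun h ↦ hS g h

theorem inv_mul_mem_of_not_disjoint_sources {a b : G}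
    (h : ¬ Disjoint (sources K S a) (sources K S b)) : a⁻¹ * b ∈ K⁻¹ * K := by
  obtain ⟨g, hga, hgb⟩ := not_disjoint_iff.1 h
  have ha := (mem_filter.1 hga).1
  have hb := (mem_filter.1 hgb).1
  simp only [← inv_smul_mem_iff, mem_inv', smul_eq_mul, mul_inv_rev, inv_inv] at ha hb
  simpa [mul_assoc] using mul_mem_mul (inv_mem_inv ha) hb

/-- A system of allowed displacements for which every finite set `A` has at least `2 * #A`
sources, with a multiplicative margin when `A` is large and linked. The first inequality is
Hall's condition for a two-to-one selection; the margin lets one restrict the choices along a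
sparse coset without destroying it. -/
structure IsDoublingSystem (K : Finset G) (S : G → Finset G) : Prop where
  subset : ∀ g, S g ⊆ K
  doubling : ∀ A : Finset G, 2 * #A ≤ #(A.biUnion (sources K S))
  slack : ∃ ε > (0 : ℝ), ∃ R : ℕ, ∀ A : Finset G,
    IsLinked (fun b a ↦ b⁻¹ * a ∈ K⁻¹ * K) A → R ≤ #A →
      (2 + ε) * #A ≤ #(A.biUnion (sources K S))

theorem isDoublingSystem_const (hK : ∀ A : Finset G, 3 * #A ≤ #(A * K⁻¹)) :
    IsDoublingSystem K fun _ ↦ K := by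
  have hsources (A : Finset G) : A.biUnion (sources K fun _ ↦ K) = A * K⁻¹ := by
    ext g
    simp only [mem_biUnion, mem_sources fun _ ↦ Subset.rfl, mem_mul, mem_inv']
    exact ⟨fun ⟨a, ha, hg⟩ ↦ ⟨a, ha, a⁻¹ * g, by simpa using hg, by group⟩,
      fun ⟨a, ha, k, hk, hg⟩ ↦ ⟨a, ha, by simpa [← hg] using hk⟩⟩
  refine ⟨fun _ ↦ Subset.rfl, fun A ↦ ?_, 1, one_pos, 0, fun A _ _ ↦ ?_⟩
  · rw [hsources]
    exact (Nat.mul_le_mul_right _ (by norm_num)).trans (hK A)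
  · rw [hsources]
    norm_num
    exact_mod_cast hK A

namespace IsDoublingSystem

theorem nonempty (hS : IsDoublingSystem K S) : K.Nonempty := by
  have hcard : 0 < #((({1} : Finset G)).biUnion (sources K S)) :=
    lt_of_lt_of_le (by simp) (hS.doubling {1})
  obtain ⟨g, hg⟩ := card_pos.1 hcard
  rw [singleton_biUnion, mem_sources hS.subset] at hg
  exact ⟨_, hS.subset g hg⟩

theorem exists_two_to_one_selection (hS : IsDoublingSystem K S) (hne : ∀ g, (S g).Nonempty) :
    ∃ (c : G → G) (φ : G × Fin 2 → G),
      (∀ g, c g ∈ S g) ∧ φ.Injective ∧ ∀ p, φ p * c (φ p) = p.1 := by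
  obtain ⟨φ, hφ, hmem⟩ := exists_injective_mem_of_mul_card_le_card_biUnion hS.doubling
  have hchoice (g : G) : ∃ k ∈ S g, ∀ p, φ p = g → g * k = p.1 := by
    by_cases hg : ∃ p, φ p = g
    · obtain ⟨p, rfl⟩ := hg
      exact ⟨_, (mem_sources hS.subset).1 (hmem p), fun q hq ↦ by
        rw [hφ hq, mul_inv_cancel_left]⟩
    · obtain ⟨k, hk⟩ := hne g
      exact ⟨k, hk, fun p hp ↦ absurd ⟨p, hp⟩ hg⟩
  choose c hcS hc using hchoice
  exact ⟨c, φ, hcS, hφ, fun p ↦ hc _ p rfl⟩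

end IsDoublingSystem

variable {Γ : Subgroup G} {g k : G}

open scoped Classical in
/-- The points of the coset `Γ g` that can reach `A` by a displacement in `K`. -/
noncomputable def pinnedPoints (K : Finset G) (Γ : Subgroup G) (g : G) (A : Finset G) : Finset G :=
  {p ∈ A * K⁻¹ | p * g⁻¹ ∈ Γ}

theorem mem_pinnedPoints {A : Finset G} {p : G} :
    p ∈ pinnedPoints K Γ g A ↔ (∃ a ∈ A, p⁻¹ * a ∈ K) ∧ p * g⁻¹ ∈ Γ := by
  classical
  rw [pinnedPoints, mem_filter, mem_mul]
  refine and_congr_left fun _ ↦ exists_congr fun a ↦ and_congr_right fun _ ↦ ?_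
  exact ⟨fun ⟨b, hb, hp⟩ ↦ by simpa [← hp] using hb, fun h ↦ ⟨a⁻¹ * p, by simpa using h, by group⟩⟩

theorem card_biUnion_sources_le_add_card_pinnedPoints (hS : ∀ g, S g ⊆ K)
    (hpin : ∀ a, pin S Γ g k a ⊆ K) (A : Finset G) :
    #(A.biUnion (sources K S)) ≤
      #(A.biUnion (sources K (pin S Γ g k))) + #(pinnedPoints K Γ g A) := by
  refine (card_le_card fun p hp ↦ ?_).trans (card_union_le _ _)
  obtain ⟨a, ha, hpa⟩ := mem_biUnion.1 hp
  rw [mem_sources hS] at hpa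
  rw [mem_union, mem_biUnion]
  by_cases hpΓ : p * g⁻¹ ∈ Γ
  · exact .inr (mem_pinnedPoints.2 ⟨⟨a, ha, hS p hpa⟩, hpΓ⟩)
  · exact .inl ⟨a, ha, by rwa [mem_sources hpin, pin_of_notMem hpΓ]⟩

-- If only `γ g` is pinned near `A`, translate the selection by `γ`: it already uses `k` there.
theorem two_mul_card_le_of_card_pinnedPoints_le_one {c : G → G} {φ : G × Fin 2 → G}
    (hc : ∀ g, c g ∈ S g) (hφ : φ.Injective) (hcφ : ∀ p, φ p * c (φ p) = p.1)
    (hSK : ∀ g, S g ⊆ K) (hS : ∀ γ ∈ Γ, shiftAct γ S = S) {A : Finset G}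
    (hA : #(pinnedPoints K Γ g A) ≤ 1) :
    2 * #A ≤ #(A.biUnion (sources K (pin S Γ g (c g)))) := by
  have hpin : ∀ a, pin S Γ g (c g) a ⊆ K := fun a ↦ (pin_subset (hc g) hS a).trans (hSK a)
  obtain ⟨γ, hγ, hγP⟩ : ∃ γ ∈ Γ, ∀ p ∈ pinnedPoints K Γ g A, p = γ * g := by
    rcases (pinnedPoints K Γ g A).eq_empty_or_nonempty with hP | ⟨p, hp⟩
    · exact ⟨1, Γ.one_mem, by simp [hP]⟩
    · exact ⟨p * g⁻¹, (mem_pinnedPoints.1 hp).2, fun q hq ↦ by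
        rw [inv_mul_cancel_right]; exact card_le_one.1 hA q hq p hp⟩
  let φγ (p : G × Fin 2) : G := γ * φ (γ⁻¹ * p.1, p.2)
  have hφγ : φγ.Injective := fun p q hpq ↦ by
    have := hφ (mul_left_cancel hpq)
    exact Prod.ext (mul_left_cancel (congrArg Prod.fst this)) (congrArg (·.2) this :)
  have hmem : ∀ p ∈ A ×ˢ (univ : Finset (Fin 2)),
      φγ p ∈ A.biUnion (sources K (pin S Γ g (c g))) := by
    intro p hp
    have hpA : p.1 ∈ A := (mem_product.1 hp).1
    have hdisp : (φγ p)⁻¹ * p.1 = c (γ⁻¹ * φγ p) := by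
      rw [inv_mul_eq_iff_eq_mul, show γ⁻¹ * φγ p = φ (γ⁻¹ * p.1, p.2) by simp [φγ], mul_assoc,
        hcφ, mul_inv_cancel_left]
    have hcS : c (γ⁻¹ * φγ p) ∈ S (φγ p) := by
      rw [← congrFun (hS γ hγ) (φγ p)]
      exact hc _
    refine mem_biUnion.2 ⟨p.1, hpA, ?_⟩
    rw [mem_sources hpin, hdisp]
    by_cases hΓ : φγ p * g⁻¹ ∈ Γ
    · have hP : φγ p ∈ pinnedPoints K Γ g A := mem_pinnedPoints.2
        ⟨⟨p.1, hpA, by rw [hdisp]; exact hSK _ hcS⟩, hΓ⟩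
      rw [pin_of_mem hΓ, hγP _ hP, inv_mul_cancel_left]
      exact mem_singleton_self _
    · rwa [pin_of_notMem hΓ]
  calc 2 * #A = #(A ×ˢ (univ : Finset (Fin 2))) := by rw [card_product, card_fin, mul_comm]
    _ ≤ _ := card_le_card_of_injOn φγ hmem hφγ.injOn

theorem IsLinked.card_pinnedPoints_le_one_or_mul_card_le (hK : K.Nonempty) {A : Finset G}
    (hA : IsLinked (fun b a ↦ b⁻¹ * a ∈ K⁻¹ * K) A) {ρ : ℕ}
    (hΓ : ∀ γ ∈ Γ, g⁻¹ * γ * g ∈ K * ((K⁻¹ * K) ^ ρ * ((K⁻¹ * K) ^ ρ)⁻¹) * K⁻¹ → γ = 1) :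
    #(pinnedPoints K Γ g A) ≤ 1 ∨ (ρ + 1) * #(pinnedPoints K Γ g A) ≤ #A := by
  have hreach : ∀ p ∈ pinnedPoints K Γ g A, ∃ a ∈ A, p⁻¹ * a ∈ K :=
    fun p hp ↦ (mem_pinnedPoints.1 hp).1
  choose! f hfA hfK using hreach
  have hone : (1 : G) ∈ K⁻¹ * K := by
    obtain ⟨k, hk⟩ := hK
    simpa using mul_mem_mul (inv_mem_inv hk) hk
  refine hA.card_le_one_or_mul_card_le hone hfA fun p hp q hq hpq hclose ↦ hpq ?_
  have hγ : (p * g⁻¹)⁻¹ * (q * g⁻¹) ∈ Γ :=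
    Γ.mul_mem (Γ.inv_mem (mem_pinnedPoints.1 hp).2) (mem_pinnedPoints.1 hq).2
  have hconj : g⁻¹ * ((p * g⁻¹)⁻¹ * (q * g⁻¹)) * g =
      p⁻¹ * f p * ((f p)⁻¹ * f q) * (q⁻¹ * f q)⁻¹ := by group
  have hone := hΓ _ hγ (hconj ▸
    mul_mem_mul (mul_mem_mul (hfK p hp) hclose) (inv_mem_inv (hfK q hq)))
  exact mul_right_cancel (inv_mul_eq_one.1 hone)

theorem cast_le_mul_of_le_one_or_mul_le {P A ρ : ℕ} {δ : ℝ} (hδ : 1 ≤ δ * ρ) (hρA : ρ ≤ A)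
    (h : P ≤ 1 ∨ (ρ + 1) * P ≤ A) : (P : ℝ) ≤ δ * A := by
  have hδ0 : 0 < δ := pos_of_mul_pos_left (one_pos.trans_le hδ) ρ.cast_nonneg
  rcases h with h | h
  · calc (P : ℝ) ≤ 1 := mod_cast h
      _ ≤ δ * ρ := hδ
      _ ≤ δ * A := by gcongr
  · calc (P : ℝ) ≤ δ * ρ * P := le_mul_of_one_le_left P.cast_nonneg hδ
      _ ≤ δ * ((ρ + 1) * P : ℕ) := by
          rw [mul_assoc]
          gcongr
          exact_mod_cast Nat.mul_le_mul_right P ρ.le_succ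
      _ ≤ δ * A := by gcongr

namespace IsDoublingSystem

theorem exists_pin (hS : IsDoublingSystem K S) (hne : ∀ g, (S g).Nonempty) (g : G) :
    ∃ k ∈ S g, ∃ B : Finset G, ∀ Γ : Subgroup G, (∀ γ ∈ Γ, shiftAct γ S = S) →
      (∀ γ ∈ Γ, γ ∈ B → γ = 1) → IsDoublingSystem K (pin S Γ g k) := by
  obtain ⟨c, φ, hc, hφ, hcφ⟩ := hS.exists_two_to_one_selection hne
  obtain ⟨ε, hε, R, hslack⟩ := hS.slack
  obtain ⟨ρ, hRρ, hδρ⟩ : ∃ ρ : ℕ, R ≤ ρ ∧ 1 ≤ ε / 2 * ρ := by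
    obtain ⟨n, hn⟩ := exists_nat_ge (max (R : ℝ) (2 / ε))
    refine ⟨n, Nat.cast_le.1 ((le_max_left _ _).trans hn), ?_⟩
    have := (div_le_iff₀ hε).1 ((le_max_right _ _).trans hn)
    linarith
  let B := (K * ((K⁻¹ * K) ^ ρ * ((K⁻¹ * K) ^ ρ)⁻¹) * K⁻¹).image fun b ↦ g * b * g⁻¹
  refine ⟨c g, hc g, B, fun Γ hΓS hΓB ↦ ?_⟩
  have hpin : ∀ a, pin S Γ g (c g) a ⊆ K := fun a ↦
    (pin_subset (hc g) hΓS a).trans (hS.subset a)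
  have hsparse {A : Finset G} (hA : IsLinked (fun b a ↦ b⁻¹ * a ∈ K⁻¹ * K) A) :=
    hA.card_pinnedPoints_le_one_or_mul_card_le (Γ := Γ) (g := g) (ρ := ρ) hS.nonempty
      fun γ hγ hB ↦ hΓB γ hγ (mem_image.2 ⟨_, hB, by group⟩)
  have hlarge : ∀ A : Finset G, IsLinked (fun b a ↦ b⁻¹ * a ∈ K⁻¹ * K) A → ρ ≤ #A →
      (2 + ε / 2) * #A ≤ #(A.biUnion (sources K (pin S Γ g (c g)))) := by
    intro A hA hρA
    have hpinned := cast_le_mul_of_le_one_or_mul_le hδρ hρA (hsparse hA)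
    have hcount : (#(A.biUnion (sources K S)) : ℝ) ≤
        #(A.biUnion (sources K (pin S Γ g (c g)))) + #(pinnedPoints K Γ g A) :=
      mod_cast card_biUnion_sources_le_add_card_pinnedPoints hS.subset hpin A
    linarith [hslack A hA (hRρ.trans hρA)]
  refine ⟨hpin, ?_, ε / 2, half_pos hε, ρ, hlarge⟩
  refine mul_card_le_card_biUnion_of_isLinked
    (fun _ _ ↦ inv_mul_mem_of_not_disjoint_sources) fun A hA ↦ ?_
  by_cases hP : #(pinnedPoints K Γ g A) ≤ 1
  · exact two_mul_card_le_of_card_pinnedPoints_le_one hc hφ hcφ hS.subset hΓS hP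
  · have hρA : ρ ≤ #A := by nlinarith [(hsparse hA).resolve_left hP]
    have := hlarge A hA hρA
    have : (2 : ℝ) * #A ≤ #(A.biUnion (sources K (pin S Γ g (c g)))) := by
      nlinarith [Nat.cast_nonneg (α := ℝ) #A]
    exact_mod_cast this

end IsDoublingSystem

end DoublingSystem

section ToeplitzAlong

open Filter Finset
open scoped Pointwise

/-- The filter `F` has a basis of subgroups, such as a neighbourhood basis of the identity of a
non-Archimedean group topology. -/
def IsSubgroupBased {G : Type*} [Group G] (F : Filter G) : Prop :=
  ∀ s ∈ F, ∃ Γ : Subgroup G, (Γ : Set G) ∈ F ∧ (Γ : Set G) ⊆ s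

/-- Every coordinate of `x` is invariant under `F`-almost all translations. For a filter of
finite index subgroups this is the Toeplitz property, with the periods prescribed by `F`. -/
def IsToeplitzAlong {G A : Type*} [Group G] (F : Filter G) (x : G → A) : Prop :=
  ∀ a, ∀ᶠ γ in F, x (γ⁻¹ * a) = x a

theorem IsToeplitzAlong.isToeplitz {G A : Type*} [Group G] {F : Filter G} {x : G → A}
    (hx : IsToeplitzAlong F x) (hF : IsSubgroupBased F)
    (hfin : ∀ Γ : Subgroup G, (Γ : Set G) ∈ F → Γ.FiniteIndex) : IsToeplitz x := fun a ↦
  let ⟨Γ, hΓF, hΓ⟩ := hF _ (hx a)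
  ⟨Γ, hfin Γ hΓF, fun _ hγ ↦ hΓ hγ⟩

theorem exists_eventually_eq_singleton {ι α : Type*} {S : ℕ → ι → Finset α} (hS : Antitone S)
    (hne : ∀ n a, (S n a).Nonempty) (hsing : ∀ a, ∃ n k, S n a = {k}) :
    ∃ x : ι → α, ∀ a, ∀ᶠ n in atTop, S n a = {x a} := by
  choose N x hx using hsing
  refine ⟨x, fun a ↦ eventually_atTop.2 ⟨N a, fun n hn ↦ ?_⟩⟩
  exact ((hne n a).subset_singleton_iff).1 ((hS hn a).trans_eq (hx a))

variable {G : Type*} [Group G] [DecidableEq G] {K : Finset G} {S : G → Finset G} {F : Filter G}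

/-- A doubling system with nonempty choices that is invariant under `F`-almost all translations:
a stage in the construction of a two-to-one selection that is Toeplitz along `F`. -/
structure IsPeriodicDoublingSystem (F : Filter G) (K : Finset G) (S : G → Finset G) : Prop
    extends IsDoublingSystem K S where
  nonempty_apply : ∀ g, (S g).Nonempty
  eventually_shiftAct_eq : ∀ᶠ γ in F, shiftAct γ S = S

theorem IsPeriodicDoublingSystem.exists_le_eq_singleton (hF : IsSubgroupBased F)
    (hsep : ∀ g ≠ 1, ∀ᶠ γ in F, γ ≠ g) (hS : IsPeriodicDoublingSystem F K S) (g : G) :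
    ∃ S' ≤ S, IsPeriodicDoublingSystem F K S' ∧ ∃ k, S' g = {k} := by
  obtain ⟨k, hk, B, hB⟩ := hS.exists_pin hS.nonempty_apply g
  have hsparse : ∀ᶠ γ in F, ∀ b ∈ B, b ≠ 1 → γ ≠ b :=
    (eventually_all_finset B).2 fun b _ ↦ by
      by_cases hb : b = 1
      · simp [hb]
      · simpa [hb] using hsep b hb
  obtain ⟨Γ, hΓF, hΓ⟩ := hF _ (hS.eventually_shiftAct_eq.and hsparse)
  have hinv : ∀ γ ∈ Γ, shiftAct γ S = S := fun γ hγ ↦ (hΓ hγ).1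
  refine ⟨pin S Γ g k, pin_subset hk hinv, ⟨?_, fun a ↦ ?_, ?_⟩, k, pin_self⟩
  · exact hB Γ hinv fun γ hγ hγB ↦ by_contra fun hne ↦ (hΓ hγ).2 γ hγB hne rfl
  · by_cases ha : a * g⁻¹ ∈ Γ
    · exact ⟨k, by simp [pin_of_mem ha]⟩
    · simpa [pin_of_notMem ha] using hS.nonempty_apply a
  · filter_upwards [hΓF] with γ hγ
    exact shiftAct_pin hγ (hinv γ hγ)

theorem IsPeriodicDoublingSystem.exists_antitone [Countable G] (hF : IsSubgroupBased F)
    (hsep : ∀ g ≠ 1, ∀ᶠ γ in F, γ ≠ g) (hS : IsPeriodicDoublingSystem F K S) :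
    ∃ T : ℕ → G → Finset G, Antitone T ∧ (∀ n, IsPeriodicDoublingSystem F K (T n)) ∧
      ∀ a, ∃ n k, T n a = {k} := by
  obtain ⟨e, he⟩ := exists_surjective_nat G
  choose! next hle hnext hsing using
    fun T (hT : IsPeriodicDoublingSystem F K T) ↦ hT.exists_le_eq_singleton hF hsep
  let T (n : ℕ) : G → Finset G := n.rec S fun n T ↦ next T (e n)
  have hT (n : ℕ) : IsPeriodicDoublingSystem F K (T n) := by
    induction n with
    | zero => exact hS
    | succ n ih => exact hnext _ ih _
  refine ⟨T, antitone_nat_of_succ_le fun n ↦ hle _ (hT n) _, hT, fun a ↦ ?_⟩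
  obtain ⟨n, rfl⟩ := he a
  exact ⟨n + 1, hsing _ (hT n) _⟩

theorem exists_isToeplitzAlong_two_le_card [Countable G] (hF : IsSubgroupBased F)
    (hsep : ∀ g ≠ 1, ∀ᶠ γ in F, γ ≠ g) (hK : ∀ A : Finset G, 3 * #A ≤ #(A * K⁻¹)) :
    ∃ x : G → G, (∀ g, x g ∈ K) ∧ IsToeplitzAlong F x ∧
      ∀ h, 2 ≤ #{k ∈ K | x (h * k⁻¹) = k} := by
  have hconst := isDoublingSystem_const hK
  have hstart : IsPeriodicDoublingSystem F K fun _ ↦ K :=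
    ⟨hconst, fun _ ↦ hconst.nonempty, .of_forall fun _ ↦ rfl⟩
  obtain ⟨T, hanti, hT, hsing⟩ := hstart.exists_antitone hF hsep
  obtain ⟨x, hx⟩ := exists_eventually_eq_singleton hanti (fun n ↦ (hT n).nonempty_apply) hsing
  have hxT (n : ℕ) (a : G) : x a ∈ T n a := by
    obtain ⟨m, hm, hnm⟩ := ((hx a).and (eventually_ge_atTop n)).exists
    exact hanti hnm a (hm ▸ mem_singleton_self _)
  refine ⟨x, fun g ↦ (hT 0).subset g (hxT 0 g), fun a ↦ ?_, fun h ↦ ?_⟩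
  · obtain ⟨n, hn⟩ := (hx a).exists
    filter_upwards [(hT n).eventually_shiftAct_eq] with γ hγ
    have : T n (γ⁻¹ * a) = {x a} := hn ▸ congrFun hγ a
    exact mem_singleton.1 (this ▸ hxT n (γ⁻¹ * a))
  · obtain ⟨n, hn⟩ := ((eventually_all_finset K).2 fun k _ ↦ hx (h * k⁻¹)).exists
    have hdouble : 2 ≤ #(sources K (T n) h) := by simpa using (hT n).doubling {h}
    refine hdouble.trans (card_le_card_of_injOn (fun g ↦ g⁻¹ * h) (fun g hg ↦ ?_)
      fun g _ g' _ hgg' ↦ by simpa using hgg')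
    have hg : g⁻¹ * h ∈ T n g := (mem_sources (hT n).subset).1 hg
    have hgK := (hT n).subset g hg
    have hsingleton : T n g = {x g} := by simpa using hn _ hgK
    have hxg := mem_singleton.1 (hsingleton ▸ hg)
    exact mem_coe.2 (mem_filter.2
      ⟨hgK, by rw [show h * (g⁻¹ * h)⁻¹ = g by group]; exact hxg.symm⟩)

end ToeplitzAlong

section OrbitAverage

open BoundedContinuousFunction
open scoped Pointwise

variable {G X : Type*} [Group G] [MeasurableSpace X] [MulAction G X]

/-- The uniform probability measure on the points `a • x`, `a ∈ A`, counted with multiplicity. -/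
noncomputable def orbitAverage (A : Finset G) (x : X) : Measure X :=
  (A.card : ENNReal)⁻¹ • ∑ a ∈ A, Measure.dirac (a • x)

theorem isProbabilityMeasure_orbitAverage {A : Finset G} (hA : A.Nonempty) (x : X) :
    IsProbabilityMeasure (orbitAverage A x) := by
  constructor
  simp only [orbitAverage, Measure.smul_apply, Measure.coe_finsetSum, Finset.sum_apply,
    measure_univ, Finset.sum_const, smul_eq_mul, nsmul_eq_mul, mul_one]
  exact ENNReal.inv_mul_cancel (by simpa using hA.ne_empty) (ENNReal.natCast_ne_top _)

variable [TopologicalSpace X] [OpensMeasurableSpace X]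

theorem integral_orbitAverage (A : Finset G) (x : X) (f : X →ᵇ ℝ) :
    ∫ y, f y ∂orbitAverage A x = (A.card : ℝ)⁻¹ * ∑ a ∈ A, f (a • x) := by
  rw [orbitAverage, integral_smul_measure, integral_finsetSum_measure fun _ _ ↦ f.integrable _]
  simp [integral_dirac' _ _ f.continuous.stronglyMeasurable]

theorem norm_integral_smul_orbitAverage_sub_le [DecidableEq G] [ContinuousConstSMul G X]
    (A : Finset G) (x : X) (f : X →ᵇ ℝ) (g : G) :
    ‖∫ y, f (g • y) ∂orbitAverage A x - ∫ y, f y ∂orbitAverage A x‖ ≤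
      2 * ‖f‖ * ((g • A \ A).card / A.card) := by
  have hsum (T : Finset G) : ‖∑ a ∈ T, f (a • x)‖ ≤ T.card * ‖f‖ := by
    simpa using norm_sum_le_of_le T fun a _ ↦ f.norm_coe_le_norm (a • x)
  have hcard : (A \ g • A).card = (g • A \ A).card :=
    Finset.card_sdiff_comm (Finset.card_smul_finset _ _).symm
  have htranslate : ∑ a ∈ A, f (g • a • x) = ∑ b ∈ g • A, f (b • x) := by
    rw [← Finset.image_smul, Finset.sum_image (MulAction.injective g).injOn]
    simp only [smul_eq_mul, mul_smul]
  rw [integral_orbitAverage, show ∫ y, f (g • y) ∂orbitAverage A x = _ from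
    integral_orbitAverage A x (f.compContinuous ⟨(g • ·), continuous_const_smul g⟩)]
  simp only [compContinuous_apply, ContinuousMap.coe_mk]
  rw [htranslate, ← mul_sub, ← Finset.sum_sdiff_sub_sum_sdiff, norm_mul,
    Real.norm_of_nonneg (by positivity)]
  calc _ ≤ (A.card : ℝ)⁻¹ * ((g • A \ A).card * ‖f‖ + (A \ g • A).card * ‖f‖) := by
        gcongr
        exact (norm_sub_le _ _).trans (add_le_add (hsum _) (hsum _))
    _ = 2 * ‖f‖ * ((g • A \ A).card / A.card) := by rw [hcard]; ring

end OrbitAverage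

section Folner

open Filter Topology
open scoped Pointwise

/-- Følner's condition: some nonempty finite sets are almost invariant under left translation by
any prescribed finite set. -/
def FolnerCondition (G : Type*) [Group G] [DecidableEq G] : Prop :=
  ∀ (K : Finset G) (ε : ℝ), 0 < ε →
    ∃ A : Finset G, A.Nonempty ∧ ∀ g ∈ K, ((g • A \ A).card : ℝ) ≤ ε * A.card

variable {G : Type*} [Group G] [DecidableEq G]

theorem exists_one_add_mul_card_le_card_mul (h : ¬ FolnerCondition G) :
    ∃ (K : Finset G) (ε : ℝ), 0 < ε ∧
      ∀ A : Finset G, (1 + ε) * A.card ≤ (K * A).card := by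
  simp only [FolnerCondition] at h
  push Not at h
  obtain ⟨K, ε, hε, hK⟩ := h
  refine ⟨insert 1 K, ε, hε, fun A ↦ ?_⟩
  rcases A.eq_empty_or_nonempty with rfl | hA
  · simp
  obtain ⟨g, hg, hgA⟩ := hK A hA
  have hsub : A ∪ (g • A \ A) ⊆ insert 1 K * A := by
    rw [Finset.union_sdiff_self_eq_union]
    refine Finset.union_subset (Finset.subset_mul_right A (Finset.mem_insert_self 1 K)) ?_
    exact Finset.smul_finset_subset_mul (Finset.mem_insert_of_mem hg)
  calc (1 + ε) * A.card ≤ A.card + (g • A \ A).card := by linarith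
    _ = (A ∪ (g • A \ A)).card := by
        rw [Finset.card_union_of_disjoint Finset.disjoint_sdiff, Nat.cast_add]
    _ ≤ (insert 1 K * A).card := mod_cast Finset.card_le_card hsub

theorem exists_mul_card_le_card_mul (h : ¬ FolnerCondition G) (c : ℝ) :
    ∃ K : Finset G, ∀ A : Finset G, c * A.card ≤ (K * A).card := by
  obtain ⟨K, ε, hε, hK⟩ := exists_one_add_mul_card_le_card_mul h
  have hpow (j : ℕ) (A : Finset G) : (1 + ε) ^ j * A.card ≤ (K ^ j * A).card := by
    induction j with
    | zero => simp
    | succ j ih =>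
      calc (1 + ε) ^ (j + 1) * A.card = (1 + ε) * ((1 + ε) ^ j * A.card) := by ring
        _ ≤ (1 + ε) * (K ^ j * A).card := by gcongr
        _ ≤ (K * (K ^ j * A)).card := hK _
        _ = (K ^ (j + 1) * A).card := by rw [pow_succ', mul_assoc]
  obtain ⟨j, hj⟩ := pow_unbounded_of_one_lt c (by linarith : 1 < 1 + ε)
  exact ⟨K ^ j, fun A ↦ le_trans (by gcongr) (hpow j A)⟩

theorem FolnerCondition.exists_tendsto (h : FolnerCondition G) :
    ∃ A : Finset G × ℕ → Finset G, (∀ i, (A i).Nonempty) ∧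
      ∀ g : G, Tendsto (fun i ↦ ((g • A i \ A i).card / (A i).card : ℝ)) atTop (𝓝 0) := by
  choose A hA hAK using fun i : Finset G × ℕ ↦ h i.1 (1 / (i.2 + 1)) (by positivity)
  refine ⟨A, hA, fun g ↦ ?_⟩
  have hlim : Tendsto (fun i : Finset G × ℕ ↦ (1 / (i.2 + 1) : ℝ)) atTop (𝓝 0) := by
    rw [← prod_atTop_atTop_eq]
    exact tendsto_one_div_add_atTop_nhds_zero_nat.comp tendsto_snd
  refine squeeze_zero' (.of_forall fun i ↦ by positivity) ?_ hlim
  filter_upwards [eventually_ge_atTop ({g}, 0)] with i hi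
  rw [div_le_iff₀ (by exact_mod_cast (hA i).card_pos)]
  exact hAK i g (hi.1 (Finset.mem_singleton_self g))

theorem FolnerCondition.exists_isProbabilityMeasure_map_smul_eq (h : FolnerCondition G)
    (X : Type*) [TopologicalSpace X] [CompactSpace X] [T2Space X] [Nonempty X]
    [MeasurableSpace X] [BorelSpace X] [HasOuterApproxClosed X] [MulAction G X]
    [ContinuousConstSMul G X] :
    ∃ μ : Measure X, IsProbabilityMeasure μ ∧ ∀ g : G, μ.map (g • ·) = μ := by
  obtain ⟨x⟩ := ‹Nonempty X›
  obtain ⟨A, hA, hlim⟩ := h.exists_tendsto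
  let ν (i : Finset G × ℕ) : ProbabilityMeasure X :=
    ⟨orbitAverage (A i) x, isProbabilityMeasure_orbitAverage (hA i) x⟩
  let U : Ultrafilter (Finset G × ℕ) := .of atTop
  obtain ⟨μ, -, hμ⟩ := isCompact_univ.ultrafilter_le_nhds (U.map ν) (by simp)
  have hconv := ProbabilityMeasure.tendsto_iff_forall_integral_tendsto.1
    (show Tendsto ν U (𝓝 μ) from hμ)
  refine ⟨μ, inferInstance, fun g ↦ ?_⟩
  have hcont : Continuous fun y : X ↦ g • y := continuous_const_smul g
  have := Measure.isProbabilityMeasure_map (μ := (μ : Measure X)) hcont.measurable.aemeasurable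
  refine ext_of_forall_integral_eq_of_IsFiniteMeasure fun f ↦ ?_
  rw [integral_map hcont.measurable.aemeasurable f.continuous.aestronglyMeasurable]
  have hdiff := (hconv (f.compContinuous ⟨_, hcont⟩)).sub (hconv f)
  have hbound : Tendsto (fun i ↦ 2 * ‖f‖ * ((g • A i \ A i).card / (A i).card : ℝ)) U (𝓝 0) := by
    simpa using ((hlim g).mono_left (Ultrafilter.of_le _)).const_mul (2 * ‖f‖)
  have hzero := squeeze_zero_norm
    (fun i ↦ norm_integral_smul_orbitAverage_sub_le (A i) x f g) hbound
  exact sub_eq_zero.1 (tendsto_nhds_unique hdiff hzero)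

/-- The action given by an unbundled map `act`. -/
abbrev mulActionOfComp {G X : Type*} [Group G] (act : G → X → X) (hone : act 1 = id)
    (hmul : ∀ g h, act (g * h) = act g ∘ act h) : MulAction G X where
  smul := act
  one_smul := congrFun hone
  mul_smul g h := congrFun (hmul g h)

theorem FolnerCondition.hasInvariantMeasuresAll (h : FolnerCondition G) :
    HasInvariantMeasuresAll G := by
  intro X _ _ _ _ _ act hact hone hmul
  let := mulActionOfComp act hone hmul
  have : ContinuousConstSMul G X := ⟨hact⟩
  exact h.exists_isProbabilityMeasure_map_smul_eq X

theorem exists_three_mul_card_le_card_mul_inv (hG : ¬ HasInvariantMeasuresAll G) :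
    ∃ K : Finset G, ∀ A : Finset G, 3 * A.card ≤ (A * K⁻¹).card := by
  obtain ⟨K, hK⟩ := exists_mul_card_le_card_mul (mt FolnerCondition.hasInvariantMeasuresAll hG) 3
  refine ⟨K, fun A ↦ ?_⟩
  have := hK A⁻¹
  rw [Finset.card_inv, ← Finset.card_inv (K * A⁻¹), mul_inv_rev, inv_inv] at this
  exact_mod_cast this

end Folner

section MassTransport

open ENNReal

-- Each `x` sends mass one back along `T (κ x)`; mass at least two would arrive at all of `s`.
theorem not_forall_two_le_card_of_measurePreserving {X ι : Type*} [MeasurableSpace X]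
    [DecidableEq ι] {μ : Measure X} [IsProbabilityMeasure μ] {K : Finset ι} {T : ι → X → X}
    (hT : ∀ i ∈ K, MeasurePreserving (T i) μ μ) {κ : X → ι}
    (hκ : ∀ i, MeasurableSet (κ ⁻¹' {i})) {s : Set X} (hs : μ s = 1) :
    ¬ ∀ y ∈ s, 2 ≤ (K.filter fun i ↦ κ (T i y) = i).card := by
  intro h
  let f (y : X) : ℝ≥0∞ := ∑ i ∈ K, (T i ⁻¹' (κ ⁻¹' {i})).indicator 1 y
  have hmeas : ∀ i ∈ K, MeasurableSet (T i ⁻¹' (κ ⁻¹' {i})) := fun i hi ↦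
    (hT i hi).measurable (hκ i)
  have hf : ∀ y ∈ s, 2 ≤ f y := by
    intro y hy
    have hcard : f y = (K.filter fun i ↦ κ (T i y) = i).card := by
      classical
      simp [f, Set.indicator_apply]
    rw [hcard]
    exact_mod_cast h y hy
  have : (2 : ℝ≥0∞) ≤ 1 := calc
    2 = 2 * μ s := by rw [hs, mul_one]
    _ ≤ 2 * μ {y | 2 ≤ f y} := by gcongr; exact hf
    _ ≤ ∫⁻ y, f y ∂μ := mul_meas_ge_le_lintegral
        (Finset.measurable_fun_sum K fun i hi ↦ measurable_one.indicator (hmeas i hi)) 2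
    _ = ∑ i ∈ K, μ (T i ⁻¹' (κ ⁻¹' {i})) := by
        rw [lintegral_finsetSum' _ fun i hi ↦
          (measurable_one.indicator (hmeas i hi)).aemeasurable]
        exact Finset.sum_congr rfl fun i hi ↦ lintegral_indicator_one (hmeas i hi)
    _ = ∑ i ∈ K, μ (κ ⁻¹' {i}) :=
        Finset.sum_congr rfl fun i hi ↦ (hT i hi).measure_preimage (hκ i).nullMeasurableSet
    _ = μ (⋃ i ∈ K, κ ⁻¹' {i}) := (measure_biUnion_finset
        (fun i _ j _ hij ↦ Set.disjoint_singleton.2 hij |>.preimage κ) fun i _ ↦ hκ i).symm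
    _ ≤ 1 := prob_le_one
  norm_num at this

end MassTransport

section ShiftMeasure

open Filter Topology

variable {G A : Type*} [Group G] [TopologicalSpace A] [DiscreteTopology A] {x : G → A}

theorem exists_shiftAct_eqOn {y : G → A} (hy : y ∈ orbitClosure x) (K : Finset G) :
    ∃ g, ∀ h ∈ K, shiftAct g x h = y h := by
  have hnear : ∀ᶠ y' in 𝓝 y, ∀ h ∈ K, y' h = y h :=
    (eventually_all_finset K).2 fun h _ ↦
      (continuous_apply h).continuousAt.eventually_mem ((isOpen_discrete {y h}).mem_nhds rfl)
  obtain ⟨_, ⟨g, rfl⟩, hg⟩ := ((mem_closure_iff_frequently.1 hy).and_eventually hnear).exists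
  exact ⟨g, hg⟩

theorem not_exists_invariant_measure_orbitClosure [DecidableEq G] [MeasurableSpace A]
    [DiscreteMeasurableSpace A] {K : Finset G} {κ : A → G}
    (hx : ∀ h, 2 ≤ (K.filter fun k ↦ κ (x (h * k⁻¹)) = k).card) :
    ¬ ∃ μ : Measure (G → A), IsProbabilityMeasure μ ∧ μ (orbitClosure x) = 1 ∧
      ∀ g, μ.map (shiftAct g) = μ := by
  rintro ⟨μ, _, hμ, hinv⟩
  have hmeas (g : G) : Measurable (shiftAct g : (G → A) → G → A) :=
    measurable_pi_lambda _ fun h ↦ measurable_pi_apply _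
  refine not_forall_two_le_card_of_measurePreserving (K := K) (κ := fun y ↦ κ (y 1))
    (fun g _ ↦ ⟨hmeas g, hinv g⟩)
    (fun g ↦ (MeasurableSet.of_discrete (s := κ ⁻¹' {g})).preimage (measurable_pi_apply 1))
    hμ fun y hy ↦ ?_
  obtain ⟨g, hg⟩ := exists_shiftAct_eqOn hy (K.image (·⁻¹))
  convert hx g⁻¹ using 4 with k hk
  rw [shiftAct, mul_one, ← hg _ (Finset.mem_image_of_mem _ hk), shiftAct]

end ShiftMeasure

section Splitting

open Filter Topology

/-- A two-valued function continuous away from `z₁` that takes both values in every punctured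
neighbourhood of `z₁`. -/
structure IsSplitting {Z : Type*} [TopologicalSpace Z] (ψ : Z → Bool) (z₁ : Z) : Prop where
  continuousAt : ∀ z ≠ z₁, ContinuousAt ψ z
  frequently_eq : ∀ b, ∃ᶠ v in 𝓝[≠] z₁, ψ v = b

theorem eventually_mem_iff_of_isClopen {Z : Type*} [TopologicalSpace Z] {C : Set Z}
    (hC : IsClopen C) (z : Z) : ∀ᶠ z' in 𝓝 z, (z' ∈ C ↔ z ∈ C) := by
  by_cases hz : z ∈ C
  · filter_upwards [hC.isOpen.mem_nhds hz] with z' hz'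
    simp only [hz, hz']
  · filter_upwards [hC.compl.isOpen.mem_nhds hz] with z' hz'
    simpa only [hz, iff_false, Set.mem_compl_iff] using hz'

variable {Z : Type*} [TopologicalSpace Z] {z₁ : Z}

theorem exists_hasAntitoneBasis_isClopen_ssubset [CompactSpace Z] [T2Space Z]
    [TotallyDisconnectedSpace Z] [FirstCountableTopology Z] [(𝓝[≠] z₁).NeBot] :
    ∃ C : ℕ → Set Z, (𝓝 z₁).HasAntitoneBasis C ∧ (∀ n, IsClopen (C n)) ∧
      ∀ n, C (n + 1) ⊂ C n := by
  obtain ⟨C, hC, hbasis⟩ := (nhds_basis_clopen z₁).exists_antitone_subbasis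
  have hshrink (m : ℕ) : ∀ᶠ n in atTop, C n ⊂ C m := by
    obtain ⟨v, hv, hvz⟩ := (𝓝[≠] z₁).nonempty_of_mem
      (inter_mem (mem_nhdsWithin_of_mem_nhds (hbasis.mem m)) self_mem_nhdsWithin)
    obtain ⟨n, hn⟩ := hbasis.mem_iff.1 (isOpen_compl_singleton.mem_nhds (Ne.symm hvz))
    filter_upwards [eventually_ge_atTop (max m n)] with k hk
    exact ⟨hbasis.antitone ((le_max_left _ _).trans hk),
      fun h ↦ hn (hbasis.antitone ((le_max_right _ _).trans hk) (h hv)) rfl⟩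
  obtain ⟨φ, -, hφ, hφbasis⟩ := hbasis.subbasis_with_rel hshrink
  exact ⟨C ∘ φ, hφbasis, fun n ↦ (hC _).2, fun n ↦ hφ n.lt_succ_self⟩

/-- The first index at which `z` lies outside the sequence of sets `C`, and `0` if there is
none. -/
noncomputable def exitTime {Z : Type*} (C : ℕ → Set Z) (z : Z) : ℕ :=
  sInf {n | z ∉ C n}

theorem notMem_exitTime {Z : Type*} {C : ℕ → Set Z} {z : Z} (h : ∃ n, z ∉ C n) :
    z ∉ C (exitTime C z) :=
  Nat.sInf_mem (s := {n | z ∉ C n}) h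

theorem exitTime_eq_succ {Z : Type*} {C : ℕ → Set Z} (hC : Antitone C) {z : Z} {n : ℕ}
    (hz : z ∈ C n) (hz' : z ∉ C (n + 1)) : exitTime C z = n + 1 :=
  (Nat.sInf_le hz').antisymm
    (not_lt.1 fun hlt ↦ notMem_exitTime ⟨n + 1, hz'⟩ (hC (Nat.lt_succ_iff.1 hlt) hz))

theorem eventually_exitTime_eq {C : ℕ → Set Z} (hC : ∀ n, IsClopen (C n)) {z : Z}
    (hz : ∃ n, z ∉ C n) : ∀ᶠ z' in 𝓝 z, exitTime C z' = exitTime C z := by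
  have hsame : ∀ᶠ z' in 𝓝 z, ∀ m ∈ Set.Iic (exitTime C z), (z' ∈ C m ↔ z ∈ C m) :=
    (eventually_all_finite (Set.finite_Iic _)).2 fun m _ ↦ eventually_mem_iff_of_isClopen (hC m) z
  filter_upwards [hsame] with z' hz'
  have hexit : z' ∉ C (exitTime C z) := mt (hz' _ Set.self_mem_Iic).1 (notMem_exitTime hz)
  have hle : exitTime C z' ≤ exitTime C z := Nat.sInf_le hexit
  exact hle.antisymm (Nat.sInf_le (mt (hz' _ hle).2 (notMem_exitTime ⟨_, hexit⟩)))

theorem exists_isSplitting [CompactSpace Z] [T2Space Z] [TotallyDisconnectedSpace Z]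
    [FirstCountableTopology Z] [(𝓝[≠] z₁).NeBot] : ∃ ψ : Z → Bool, IsSplitting ψ z₁ := by
  obtain ⟨C, hbasis, hclopen, hssub⟩ := exists_hasAntitoneBasis_isClopen_ssubset (z₁ := z₁)
  refine ⟨fun z ↦ (exitTime C z).bodd, fun z hz ↦ ?_, fun b ↦ frequently_iff.2 fun {O} hO ↦ ?_⟩
  · obtain ⟨n, hn⟩ := hbasis.mem_iff.1 (isOpen_compl_singleton.mem_nhds hz.symm)
    refine (continuousAt_const (y := (exitTime C z).bodd)).congr ?_
    filter_upwards [eventually_exitTime_eq hclopen ⟨n, fun hzn ↦ hn hzn rfl⟩] with z' hz'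
    rw [hz']
  · obtain ⟨O', hO', hOO'⟩ := mem_nhdsWithin_iff_exists_mem_nhds_inter.1 hO
    obtain ⟨j, hj⟩ := hbasis.mem_iff.1 hO'
    obtain ⟨n, hjn, hn⟩ : ∃ n, j ≤ n ∧ (n + 1).bodd = b := by
      by_cases hb : (j + 1).bodd = b
      · exact ⟨j, le_rfl, hb⟩
      · exact ⟨j + 1, j.le_succ, by rw [Nat.bodd_succ, Bool.eq_not.2 hb, Bool.not_not]⟩
    obtain ⟨v, hv, hv'⟩ := Set.exists_of_ssubset (hssub n)
    have hvz : v ≠ z₁ := fun h ↦ hv' (h ▸ mem_of_mem_nhds (hbasis.mem _))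
    exact ⟨v, hOO' ⟨hj (hbasis.antitone hjn hv), hvz⟩,
      by rw [exitTime_eq_succ hbasis.antitone hv hv', hn]⟩

end Splitting

section Return

open Filter Topology Uniformity
open scoped Pointwise

variable {G Z : Type*} [Group G] [MulAction G Z]

/-- The filter on `G` of return times of `z` to its neighbourhoods. -/
def returnFilter (G : Type*) {Z : Type*} [SMul G Z] [TopologicalSpace Z] (z : Z) : Filter G :=
  comap (fun g : G ↦ g • z) (𝓝 z)

theorem eventually_returnFilter_ne [TopologicalSpace Z] [T1Space Z] {z : Z}
    (hz : ∀ g : G, g • z = z → g = 1) {g : G} (hg : g ≠ 1) :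
    ∀ᶠ γ in returnFilter G z, γ ≠ g := by
  filter_upwards [preimage_mem_comap (isOpen_compl_singleton.mem_nhds (Ne.symm (mt (hz g) hg)))]
    with γ hγ
  rintro rfl
  exact hγ rfl

/-- The group elements that do not change the set of times at which the orbit of `z` visits `C`. -/
def itineraryStabilizer (C : Set Z) (z : Z) : Subgroup G where
  carrier := {g | ∀ h : G, h • g • z ∈ C ↔ h • z ∈ C}
  one_mem' h := by rw [one_smul]
  mul_mem' {a b} ha hb h := by rw [mul_smul, ← mul_smul h a, hb (h * a), mul_smul, ha h]
  inv_mem' {a} ha h := by simpa [mul_smul] using (ha (h * a⁻¹)).symm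

theorem isLocallyConstant_visits_of_equicontinuous {ι X α : Type*} [TopologicalSpace X]
    [UniformSpace α] [CompactSpace α] {F : ι → X → α} (hF : Equicontinuous F) {C : Set α}
    (hC : IsClopen C) : IsLocallyConstant fun x ↦ {i | F i x ∈ C} := by
  obtain ⟨U, hU, -, hUC⟩ := lebesgue_number_of_compact_open hC.isClosed.isCompact hC.isOpen le_rfl
  obtain ⟨V, hV, -, hVC⟩ := lebesgue_number_of_compact_open hC.compl.isClosed.isCompact
    hC.compl.isOpen le_rfl
  refine (IsLocallyConstant.iff_eventually_eq _).2 fun x ↦ ?_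
  filter_upwards [hF x _ (inter_mem hU hV)] with y hy
  ext i
  exact ⟨fun hyi ↦ by_contra fun hxi ↦ hVC _ hxi (hy i).2 hyi, fun hxi ↦ hUC _ hxi (hy i).1⟩

theorem isSubgroupBased_returnFilter [UniformSpace Z] [CompactSpace Z] [T2Space Z]
    [TotallyDisconnectedSpace Z] (hequi : Equicontinuous fun (g : G) (z : Z) ↦ g • z) (z : Z) :
    IsSubgroupBased (returnFilter G z) := by
  intro s hs
  obtain ⟨O, hO, hOs⟩ := mem_comap.1 hs
  obtain ⟨C, ⟨hzC, hC⟩, hCO⟩ := (nhds_basis_clopen z).mem_iff.1 hO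
  refine ⟨itineraryStabilizer C z, ?_, fun γ hγ ↦ hOs (hCO ?_)⟩
  · have hvisits := isLocallyConstant_visits_of_equicontinuous hequi hC
    filter_upwards [preimage_mem_comap ((IsLocallyConstant.iff_eventually_eq _).1 hvisits z)]
      with γ hγ h using Set.ext_iff.1 hγ h
  · simpa [hzC] using hγ 1

variable [TopologicalSpace Z] [ContinuousConstSMul G Z] [MulAction.IsMinimal G Z]

theorem finiteIndex_of_mem_returnFilter [CompactSpace Z] {z : Z} {Γ : Subgroup G}
    (hΓ : (Γ : Set G) ∈ returnFilter G z) : Γ.FiniteIndex := by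
  obtain ⟨O, hO, hOΓ⟩ := mem_comap.1 hΓ
  obtain ⟨I, hI⟩ := isCompact_univ.exists_finite_cover_smul G isOpen_interior
    ⟨z, mem_interior_iff_mem_nhds.2 hO⟩
  have hcover (g : G) : ∃ i ∈ I, i⁻¹ * g ∈ Γ := by
    obtain ⟨i, hi, hgi⟩ := Set.mem_iUnion₂.1 (hI (Set.mem_univ (g • z)))
    rw [Set.mem_smul_set_iff_inv_smul_mem, ← mul_smul] at hgi
    exact ⟨i, hi, hOΓ (show _ ∈ O from interior_subset hgi)⟩
  rw [Subgroup.finiteIndex_iff_finite_quotient]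
  refine Finite.of_surjective (fun i : I ↦ (i : G ⧸ Γ)) fun q ↦ ?_
  induction q using QuotientGroup.induction_on with
  | H g =>
    obtain ⟨i, hi, hig⟩ := hcover g
    exact ⟨⟨i, hi⟩, QuotientGroup.eq.2 hig⟩

theorem closure_orbit_subgroup_mem_nhds [BaireSpace Z] (Γ : Subgroup G) [Γ.FiniteIndex] (z : Z) :
    closure (MulAction.orbit Γ z) ∈ 𝓝 z := by
  have : Nonempty Z := ⟨z⟩
  have : ContinuousConstSMul Γ Z := ⟨fun γ ↦ continuous_const_smul (γ : G)⟩
  have hcover : ⋃ q : G ⧸ Γ, q.out • closure (MulAction.orbit Γ z) = Set.univ := by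
    have hclosed : IsClosed (⋃ q : G ⧸ Γ, q.out • closure (MulAction.orbit Γ z)) :=
      isClosed_iUnion_of_finite fun q ↦ isClosed_closure.smul q.out
    refine Set.eq_univ_of_univ_subset ((MulAction.dense_orbit G z).closure_eq.ge.trans
      (hclosed.closure_subset_iff.2 ?_))
    rintro _ ⟨g, rfl⟩
    have hg : (g : G ⧸ Γ).out⁻¹ * g ∈ Γ := QuotientGroup.eq.1 (Quotient.out_eq' _)
    refine Set.mem_iUnion.2 ⟨g, ((g : G ⧸ Γ).out⁻¹ * g) • z, subset_closure ⟨⟨_, hg⟩, rfl⟩, ?_⟩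
    simp [smul_smul]
  obtain ⟨q, hq⟩ := nonempty_interior_of_iUnion_of_closed
    (fun q : G ⧸ Γ ↦ isClosed_closure.smul q.out) hcover
  rw [interior_smul, Set.smul_set_nonempty] at hq
  obtain ⟨_, hint, γ, rfl⟩ := mem_closure_iff.1 (interior_subset hq.some_mem) _ isOpen_interior
    hq.some_mem
  rw [← mem_interior_iff_mem_nhds]
  have := Set.smul_mem_smul_set (a := γ⁻¹) hint
  rwa [← interior_smul, ← closure_smul, MulAction.smul_orbit, inv_smul_smul] at this

end Return

section Perfect

theorem exists_forall_smul_ne {G Z : Type*} [Countable G] [SMul G Z] [TopologicalSpace Z]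
    [BaireSpace Z] [T1Space Z] [PerfectSpace Z] (z₀ : Z) :
    ∃ z₁ : Z, ∀ g : G, g • z₀ ≠ z₁ := by
  by_contra! h
  have : Nonempty Z := ⟨z₀⟩
  obtain ⟨g, hg⟩ := nonempty_interior_of_iUnion_of_closed (f := fun g : G ↦ {g • z₀})
    (fun _ ↦ isClosed_singleton) (Set.eq_univ_of_forall fun z ↦
      let ⟨g, hg⟩ := h z
      Set.mem_iUnion.2 ⟨g, hg.symm⟩)
  rw [interior_singleton] at hg
  exact Set.not_nonempty_empty hg

end Perfect

section JointOrbit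

open Filter Topology Uniformity

variable {G X Y Z : Type*} [Group G] [TopologicalSpace X] [MulAction G X] [MulAction G Y]
  [MulAction G Z]

theorem exists_mem_closure_orbit_eq [TopologicalSpace Y] [CompactSpace Y] [TopologicalSpace Z]
    [T2Space Z] [MulAction.IsMinimal G Z] {f : Y → Z} (hf : Continuous f)
    (hsmul : ∀ (g : G) y, f (g • y) = g • f y) (y : Y) (z : Z) :
    ∃ u ∈ closure (MulAction.orbit G y), f u = z := by
  have hclosed : IsClosed (f '' closure (MulAction.orbit G y)) :=
    (isClosed_closure.isCompact.image hf).isClosed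
  refine hclosed.closure_subset_iff.2 ?_ (MulAction.dense_orbit G (f y) z)
  rintro _ ⟨g, rfl⟩
  exact ⟨g • y, subset_closure ⟨g, rfl⟩, hsmul g y⟩

theorem eq_of_mem_closure_orbit_prod_self [UniformSpace Z] [CompactSpace Z] [T0Space Z]
    (hequi : Equicontinuous fun (g : G) (z : Z) ↦ g • z) {z z' w : Z}
    (h : (w, w) ∈ closure (MulAction.orbit G (z, z'))) : z = z' := by
  refine eq_of_uniformity fun {V} hV ↦ ?_
  have hunif := CompactSpace.uniformEquicontinuous_of_equicontinuous hequi V hV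
  obtain ⟨_, hg, g, rfl⟩ := mem_closure_iff_nhds.1 h _ (nhds_le_uniformity w hunif)
  simpa using hg g⁻¹

theorem continuous_of_isClosed_graph [TopologicalSpace Z] [CompactSpace Z] {π : X → Z}
    (h : IsClosed {p : X × Z | π p.1 = p.2}) : Continuous π := by
  refine continuous_iff_isClosed.2 fun F hF ↦ ?_
  have himage : Prod.fst '' ({p : X × Z | π p.1 = p.2} ∩ Prod.snd ⁻¹' F) = π ⁻¹' F := by
    ext y
    simp
  exact himage ▸ isClosedMap_fst_of_compactSpace _ (h.inter (hF.preimage continuous_snd))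

/-- A continuous equivariant surjection. -/
structure IsFactorMap (G : Type*) {X Z : Type*} [SMul G X] [SMul G Z] [TopologicalSpace X]
    [TopologicalSpace Z] (π : X → Z) : Prop where
  continuous : Continuous π
  surjective : Function.Surjective π
  map_smul : ∀ (g : G) y, π (g • y) = g • π y

variable [TopologicalSpace Z]

theorem exists_isFactorMap_of_closure_orbit [CompactSpace X] [CompactSpace Z] [T2Space Z]
    [ContinuousConstSMul G X] [ContinuousConstSMul G Z] [MulAction.IsMinimal G Z]
    {x₀ : X} {z₀ : Z} (hx₀ : Dense (MulAction.orbit G x₀))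
    (hfun : ∀ ⦃y z z'⦄, (y, z) ∈ closure (MulAction.orbit G (x₀, z₀)) →
      (y, z') ∈ closure (MulAction.orbit G (x₀, z₀)) → z = z') :
    ∃ π : X → Z, IsFactorMap G π ∧ π x₀ = z₀ := by
  have htotal (y : X) : ∃ z, (y, z) ∈ closure (MulAction.orbit G (x₀, z₀)) := by
    have hclosed := isClosedMap_fst_of_compactSpace _
      (isClosed_closure (s := MulAction.orbit G (x₀, z₀)))
    obtain ⟨⟨_, z⟩, h, rfl⟩ := hclosed.closure_subset_iff.2 (Set.range_subset_iff.2 fun g ↦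
      ⟨g • (x₀, z₀), subset_closure ⟨g, rfl⟩, rfl⟩) (hx₀ y)
    exact ⟨z, h⟩
  choose π hπ using htotal
  have hgraph : {p : X × Z | π p.1 = p.2} = closure (MulAction.orbit G (x₀, z₀)) :=
    Set.ext fun ⟨y, z⟩ ↦ ⟨by rintro (rfl : π y = z); exact hπ y, hfun (hπ y)⟩
  have hcont : Continuous π := continuous_of_isClosed_graph (hgraph ▸ isClosed_closure)
  have hsmul (g : G) (y : X) : π (g • y) = g • π y := hfun (hπ _)
    (smul_closure_orbit_subset g _ (Set.smul_mem_smul_set (hπ y)))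
  refine ⟨π, ⟨hcont, fun z ↦ ?_, hsmul⟩, hfun (hπ x₀) (subset_closure (MulAction.mem_orbit_self _))⟩
  obtain ⟨u, -, hu⟩ := exists_mem_closure_orbit_eq hcont hsmul x₀ z
  exact ⟨u, hu⟩

theorem eq_of_tendsto_returnFilter [T2Space X] {π : X → Z} (hπ : IsFactorMap G π) {x₀ : X} {z₀ : Z}
    (hx₀ : Dense (MulAction.orbit G x₀)) (hz₀ : π x₀ = z₀)
    (hreturn : Tendsto (fun g : G ↦ g • x₀) (returnFilter G z₀) (𝓝 x₀)) {y : X} (hy : π y = z₀) :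
    y = x₀ := by
  have : (comap (fun g : G ↦ g • x₀) (𝓝 y)).NeBot := comap_neBot_iff_frequently.2
    (mem_closure_iff_frequently.1 (hx₀ y))
  have hle : comap (fun g : G ↦ g • x₀) (𝓝 y) ≤ returnFilter G z₀ := by
    refine map_le_iff_le_comap.1 ?_
    have hlim := (hπ.continuous.tendsto y).comp (tendsto_comap (f := fun g : G ↦ g • x₀))
    simpa only [Function.comp_def, hπ.map_smul, hz₀, hy, Tendsto] using hlim
  exact tendsto_nhds_unique tendsto_comap (hreturn.mono_left hle)

theorem IsFactorMap.existsUnique_eq_smul {π : X → Z} (hπ : IsFactorMap G π) {x₀ : X}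
    (h : ∀ y, π y = π x₀ → y = x₀) (g : G) : ∃! y, π y = g • π x₀ :=
  ⟨g • x₀, hπ.map_smul g x₀, fun y hy ↦
    inv_smul_eq_iff.1 (h _ (by rw [hπ.map_smul, hy, inv_smul_smul]))⟩

theorem IsFactorMap.dense_setOf_existsUnique [MulAction.IsMinimal G Z] {π : X → Z}
    (hπ : IsFactorMap G π) {x₀ : X} (h : ∀ y, π y = π x₀ → y = x₀) :
    Dense {z | ∃! y, π y = z} :=
  (MulAction.dense_orbit G (π x₀)).mono (Set.range_subset_iff.2 (hπ.existsUnique_eq_smul h))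

theorem IsFactorMap.exists_comp_eq [CompactSpace X] [T2Space Z] [MulAction.IsMinimal G Z]
    {W : Type*} [UniformSpace W] [CompactSpace W] [T0Space W] [MulAction G W]
    {π : X → Z} (hπ : IsFactorMap G π) {x₀ : X} (hx₀ : ∀ y, π y = π x₀ → y = x₀)
    (hequi : Equicontinuous fun (g : G) (w : W) ↦ g • w) {q : X → W} (hq : IsFactorMap G q) :
    ∃ r : Z → W, IsFactorMap G r ∧ ∀ y, r (π y) = q y := by
  have hfactors {y y' : X} (h : π y = π y') : q y = q y' := by
    obtain ⟨⟨u, u'⟩, hu, huz⟩ := exists_mem_closure_orbit_eq (hπ.continuous.comp continuous_fst)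
      (fun (g : G) (p : X × X) ↦ hπ.map_smul g p.1) (y, y') (π x₀)
    have huu' : π u = π u' := closure_minimal (by rintro _ ⟨g, rfl⟩; simp [hπ.map_smul, h])
      (isClosed_eq (hπ.continuous.comp continuous_fst) (hπ.continuous.comp continuous_snd)) hu
    obtain rfl := hx₀ u huz
    obtain rfl := hx₀ u' huu'.symm
    exact eq_of_mem_closure_orbit_prod_self hequi (map_mem_closure
      (f := Prod.map q q) (hq.continuous.prodMap hq.continuous) hu
      (by rintro _ ⟨g, rfl⟩; exact ⟨g, by simp [hq.map_smul]⟩))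
  have hcomp (y : X) : q (Function.surjInv hπ.surjective (π y)) = q y :=
    hfactors (Function.surjInv_eq hπ.surjective _)
  refine ⟨q ∘ Function.surjInv hπ.surjective, ⟨?_, fun w ↦ ?_, fun g z ↦ ?_⟩, hcomp⟩
  · have hquot := IsQuotientMap.of_surjective_continuous hπ.surjective hπ.continuous
    exact hquot.continuous_iff.2 (hq.continuous.congr fun y ↦ (hcomp y).symm)
  · obtain ⟨y, rfl⟩ := hq.surjective w
    exact ⟨π y, hcomp y⟩
  · obtain ⟨y, rfl⟩ := hπ.surjective z
    rw [← hπ.map_smul]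
    simp only [Function.comp_apply, hcomp, hq.map_smul]

end JointOrbit

section Separation

open Filter Topology

variable {G X Z : Type*} [Group G] [MulAction G Z] {ψ : Z → Bool} {z₁ : Z}

theorem IsSplitting.eventually_eq [TopologicalSpace Z] [T1Space Z] (hψ : IsSplitting ψ z₁) {z : Z}
    (hz : z ≠ z₁) : ∀ᶠ z' in 𝓝 z, z' ≠ z₁ ∧ ψ z' = ψ z :=
  inter_mem (isOpen_compl_singleton.mem_nhds hz)
    ((hψ.continuousAt z hz).eventually_mem ((isOpen_discrete {ψ z}).mem_nhds rfl))

theorem IsSplitting.eq_of_mem_closure_orbit [TopologicalSpace X] [MulAction G X]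
    [TopologicalSpace Z] [T1Space Z] (hψ : IsSplitting ψ z₁) {c : X → Bool} (hc : Continuous c)
    {x₀ : X} {z₀ : Z} (hcψ : ∀ g : G, c (g • x₀) = ψ (g • z₀)) {y : X} {z : Z}
    (h : (y, z) ∈ closure (MulAction.orbit G (x₀, z₀))) (hz : z ≠ z₁) : c y = ψ z := by
  have hcy : ∀ᶠ y' in 𝓝 y, c y' = c y :=
    hc.continuousAt.eventually_mem ((isOpen_discrete {c y}).mem_nhds rfl)
  obtain ⟨_, ⟨hy', hz'⟩, g, rfl⟩ :=
    mem_closure_iff_nhds.1 h _ (prod_mem_nhds hcy (hψ.eventually_eq hz))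
  exact hy'.symm.trans ((hcψ g).trans hz'.2)

variable [UniformSpace Z] [CompactSpace Z] [T2Space Z] [TotallyDisconnectedSpace Z]
  [ContinuousConstSMul G Z] [MulAction.IsMinimal G Z]

theorem IsSplitting.exists_smul_ne_of_ne (hψ : IsSplitting ψ z₁)
    (hequi : Equicontinuous fun (g : G) (z : Z) ↦ g • z) {z₂ : Z} (hz₂ : z₂ ≠ z₁) :
    ∃ γ : G, γ • z₁ ≠ z₁ ∧ γ • z₂ ≠ z₁ ∧ ψ (γ • z₁) ≠ ψ (γ • z₂) := by
  -- The times at which `ψ` has the same value along the orbit of `z₂` as at `z₂` contain a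
  -- finite index subgroup, which moves `z₁` densely around a neighbourhood of `z₁`.
  obtain ⟨Γ, hΓ, hΓψ⟩ := isSubgroupBased_returnFilter hequi z₂ _
    (preimage_mem_comap (hψ.eventually_eq hz₂))
  have : Γ.FiniteIndex := finiteIndex_of_mem_returnFilter hΓ
  have hnhds : closure (MulAction.orbit Γ z₁) ∩ {z₁}ᶜ ∈ 𝓝[≠] z₁ := inter_mem
    (mem_nhdsWithin_of_mem_nhds (closure_orbit_subgroup_mem_nhds Γ z₁)) self_mem_nhdsWithin
  obtain ⟨v, hvψ, hv, hvz⟩ := ((hψ.frequently_eq (!ψ z₂)).and_eventually hnhds).exists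
  obtain ⟨_, hγ, γ, rfl⟩ := mem_closure_iff_nhds.1 hv _ (hψ.eventually_eq hvz)
  obtain ⟨hγ₂, hγψ₂⟩ := hΓψ γ.2
  refine ⟨γ, hγ.1, hγ₂, ?_⟩
  rw [hγψ₂, show ψ ((γ : G) • z₁) = !ψ z₂ from hγ.2.trans hvψ]
  exact Bool.not_ne_self _

theorem IsSplitting.exists_smul_ne (hψ : IsSplitting ψ z₁)
    (hequi : Equicontinuous fun (g : G) (z : Z) ↦ g • z) {z z' : Z} (hne : z ≠ z') :
    ∃ g : G, g • z ≠ z₁ ∧ g • z' ≠ z₁ ∧ ψ (g • z) ≠ ψ (g • z') := by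
  obtain ⟨⟨_, z₂⟩, hz₂, rfl⟩ := exists_mem_closure_orbit_eq (G := G)
    (continuous_fst (X := Z) (Y := Z)) (fun _ _ ↦ rfl) (z, z') z₁
  obtain ⟨γ, hγ₁, hγ₂, hγ⟩ := hψ.exists_smul_ne_of_ne hequi (G := G) (z₂ := z₂) (by
    rintro rfl
    exact hne (eq_of_mem_closure_orbit_prod_self hequi hz₂))
  obtain ⟨_, ⟨hg₁, hg₂⟩, g, rfl⟩ := mem_closure_iff_nhds.1
    (smul_closure_orbit_subset γ _ (Set.smul_mem_smul_set hz₂)) _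
    (prod_mem_nhds (hψ.eventually_eq hγ₁) (hψ.eventually_eq hγ₂))
  exact ⟨g, hg₁.1, hg₂.1, by rwa [← hg₁.2, ← hg₂.2] at hγ⟩

theorem IsSplitting.exists_isFactorMap [TopologicalSpace X] [CompactSpace X] [MulAction G X]
    [ContinuousConstSMul G X] (hψ : IsSplitting ψ z₁)
    (hequi : Equicontinuous fun (g : G) (z : Z) ↦ g • z) {c : X → Bool} (hc : Continuous c)
    {x₀ : X} {z₀ : Z} (hx₀ : Dense (MulAction.orbit G x₀))
    (hcψ : ∀ g : G, c (g • x₀) = ψ (g • z₀)) : ∃ π : X → Z, IsFactorMap G π ∧ π x₀ = z₀ := by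
  refine exists_isFactorMap_of_closure_orbit hx₀ fun y z z' hz hz' ↦ by_contra fun hne ↦ ?_
  obtain ⟨g, hgz, hgz', hg⟩ := hψ.exists_smul_ne hequi (G := G) hne
  have hval {z : Z} (hz : (y, z) ∈ closure (MulAction.orbit G (x₀, z₀))) (hgz : g • z ≠ z₁) :
      c (g • y) = ψ (g • z) :=
    hψ.eq_of_mem_closure_orbit hc hcψ
      (smul_closure_orbit_subset g _ (Set.smul_mem_smul_set hz)) hgz
  exact hg ((hval hz hgz).symm.trans (hval hz' hgz'))

end Separation

section Subshift

open Filter Topology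

variable {G A : Type*} [Group G]

theorem shiftAct_mul (g h : G) (y : G → A) : shiftAct (g * h) y = shiftAct g (shiftAct h y) := by
  ext a
  simp only [shiftAct, mul_inv_rev, mul_assoc]

variable [TopologicalSpace A] {x : G → A}

theorem continuous_shiftAct (g : G) : Continuous (shiftAct g : (G → A) → G → A) :=
  continuous_pi fun h ↦ continuous_apply (g⁻¹ * h)

theorem shiftAct_mem_orbitClosure {y : G → A} (hy : y ∈ orbitClosure x) (g : G) :
    shiftAct g y ∈ orbitClosure x :=
  map_mem_closure (continuous_shiftAct g) hy fun _ ⟨h, hh⟩ ↦ ⟨g * h, hh ▸ (shiftAct_mul g h x).symm⟩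

instance : MulAction G (orbitClosure x) where
  smul g y := ⟨shiftAct g y, shiftAct_mem_orbitClosure y.2 g⟩
  one_smul y := Subtype.ext <| funext fun a ↦ by
    change y.1 (1⁻¹ * a) = y.1 a
    rw [inv_one, one_mul]
  mul_smul g h y := Subtype.ext (shiftAct_mul g h y.1)

theorem coe_smul_orbitClosure (g : G) (y : orbitClosure x) : (g • y).1 = shiftAct g y.1 := rfl

instance : ContinuousConstSMul G (orbitClosure x) :=
  ⟨fun g ↦ ((continuous_shiftAct g).comp continuous_subtype_val).subtype_mk _⟩

instance [Finite A] : CompactSpace (orbitClosure x) :=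
  isCompact_iff_compactSpace.1 isClosed_closure.isCompact

theorem self_mem_orbitClosure (x : G → A) : x ∈ orbitClosure x :=
  subset_closure ⟨1, funext fun a ↦ by simp [shiftAct]⟩

theorem dense_orbit_orbitClosure (x : G → A) :
    Dense (MulAction.orbit G (⟨x, self_mem_orbitClosure x⟩ : orbitClosure x)) := by
  refine Subtype.dense_iff.2 (closure_mono ?_)
  rintro _ ⟨g, rfl⟩
  exact ⟨_, ⟨g, rfl⟩, rfl⟩

theorem IsToeplitzAlong.tendsto_smul {F : Filter G} (hx : IsToeplitzAlong F x) :
    Tendsto (fun g : G ↦ g • (⟨x, self_mem_orbitClosure x⟩ : orbitClosure x)) F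
      (𝓝 ⟨x, self_mem_orbitClosure x⟩) :=
  tendsto_subtype_rng.2 (tendsto_pi_nhds.2 fun a ↦ tendsto_nhds_of_eventually_eq (hx a))

theorem isFactorMap_comp_val_iff {Z : Type*} [TopologicalSpace Z] [SMul G Z] {π : (G → A) → Z} :
    IsFactorMap G (fun y : orbitClosure x ↦ π y) ↔ ContinuousOn π (orbitClosure x) ∧
      Set.SurjOn π (orbitClosure x) Set.univ ∧
      ∀ g : G, ∀ y ∈ orbitClosure x, π (shiftAct g y) = g • π y := by
  have hsurj : Function.Surjective (fun y : orbitClosure x ↦ π y) ↔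
      Set.SurjOn π (orbitClosure x) Set.univ := by
    simp [Set.SurjOn, Set.univ_subset_iff, Set.eq_univ_iff_forall, Function.Surjective]
  rw [continuousOn_iff_continuous_domRestrict, ← hsurj]
  exact ⟨fun h ↦ ⟨h.continuous, h.surjective, fun g y hy ↦ h.map_smul g ⟨y, hy⟩⟩,
    fun ⟨hcont, hsurj, hsmul⟩ ↦ ⟨hcont, hsurj, fun g y ↦ hsmul g y y.2⟩⟩

theorem dense_setOf_existsUnique_orbitClosure {Z : Type*} [TopologicalSpace Z] [MulAction G Z]
    [MulAction.IsMinimal G Z] {π : (G → A) → Z}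
    (hπ : IsFactorMap G (fun y : orbitClosure x ↦ π y)) {x₀ : orbitClosure x}
    (h : ∀ y : orbitClosure x, π y = π x₀ → y = x₀) :
    Dense {z | ∃! y, y ∈ orbitClosure x ∧ π y = z} := by
  refine (hπ.dense_setOf_existsUnique h).mono ?_
  rintro _ ⟨y, hy, huniq⟩
  exact ⟨y, ⟨y.2, hy⟩, fun y' hy' ↦ congrArg Subtype.val (huniq ⟨y', hy'.1⟩ hy'.2)⟩

end Subshift

section Coding

open Filter Topology

variable {G Z A B : Type*} [Group G]

theorem IsToeplitzAlong.comp {F : Filter G} {x : G → A} (hx : IsToeplitzAlong F x) (f : A → B) :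
    IsToeplitzAlong F fun g ↦ f (x g) := fun a ↦ (hx a).mono fun _ h ↦ congrArg f h

theorem IsToeplitzAlong.prodMk {F : Filter G} {x : G → A} {y : G → B} (hx : IsToeplitzAlong F x)
    (hy : IsToeplitzAlong F y) : IsToeplitzAlong F fun g ↦ (x g, y g) := fun a ↦
  (hx a).mp ((hy a).mono fun _ h h' ↦ Prod.ext h' h)

theorem IsSplitting.isToeplitzAlong [TopologicalSpace Z] [T1Space Z] [MulAction G Z]
    [ContinuousConstSMul G Z] {ψ : Z → Bool} {z₁ z₀ : Z} (hψ : IsSplitting ψ z₁)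
    (hz₁ : ∀ g : G, g • z₀ ≠ z₁) :
    IsToeplitzAlong (returnFilter G z₀) fun g ↦ ψ (g⁻¹ • z₀) := fun a ↦ by
  have hlim : Tendsto (fun γ : G ↦ a⁻¹ • γ • z₀) (returnFilter G z₀) (𝓝 (a⁻¹ • z₀)) :=
    ((continuous_const_smul a⁻¹).tendsto z₀).comp tendsto_comap
  filter_upwards [hlim.eventually (hψ.eventually_eq (hz₁ a⁻¹))] with γ hγ
  rw [mul_inv_rev, inv_inv, mul_smul, hγ.2]

variable [UniformSpace Z] [CompactSpace Z] [T2Space Z] [TotallyDisconnectedSpace Z]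
  [MulAction G Z] [ContinuousConstSMul G Z] [MulAction.IsMinimal G Z]

theorem IsToeplitzAlong.exists_isFactorMap [TopologicalSpace A] [DiscreteTopology A] [Finite A]
    {ψ : Z → Bool} {z₁ z₀ : Z} (hψ : IsSplitting ψ z₁)
    (hequi : Equicontinuous fun (g : G) (z : Z) ↦ g • z) {x : G → A}
    (hx : IsToeplitzAlong (returnFilter G z₀) x) {c : A → Bool}
    (hc : ∀ g, c (x g) = ψ (g⁻¹ • z₀)) :
    ∃ (π : (G → A) → Z) (x₀ : orbitClosure x), IsFactorMap G (fun y : orbitClosure x ↦ π y) ∧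
      ∀ y : orbitClosure x, π y = π x₀ → y = x₀ := by
  have : Nonempty Z := ⟨z₀⟩
  obtain ⟨π, hπ, hπx⟩ := hψ.exists_isFactorMap hequi
    (c := fun y : orbitClosure x ↦ c (y.1 1))
    (continuous_of_discreteTopology.comp ((continuous_apply 1).comp continuous_subtype_val))
    (z₀ := z₀) (dense_orbit_orbitClosure x)
    fun g ↦ by simp [coe_smul_orbitClosure, shiftAct, hc]
  obtain ⟨π, rfl⟩ := Subtype.val_injective.surjective_comp_right π
  exact ⟨π, _, hπ, fun y hy ↦ eq_of_tendsto_returnFilter hπ (dense_orbit_orbitClosure x) hπx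
    hx.tendsto_smul (hy.trans hπx)⟩

end Coding

section Existence

theorem exists_isToeplitzAlong_returnFilter {G Z : Type*} [Group G] [Countable G] [DecidableEq G]
    (hG : ¬ HasInvariantMeasuresAll G) [UniformSpace Z] [CompactSpace Z] [T2Space Z]
    [TotallyDisconnectedSpace Z] [MulAction G Z] [ContinuousConstSMul G Z]
    (hequi : Equicontinuous fun (g : G) (z : Z) ↦ g • z) {z₀ z₁ : Z}
    (hfree : ∀ g : G, g • z₀ = z₀ → g = 1) {ψ : Z → Bool} (hψ : IsSplitting ψ z₁)
    (hz₁ : ∀ g : G, g • z₀ ≠ z₁) :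
    ∃ (m : ℕ) (x : G → Fin (m + 2)) (K : Finset G) (κ : Fin (m + 2) → G) (c : Fin (m + 2) → Bool),
      IsToeplitzAlong (returnFilter G z₀) x ∧
      (∀ h, 2 ≤ (K.filter fun k ↦ κ (x (h * k⁻¹)) = k).card) ∧ ∀ g, c (x g) = ψ (g⁻¹ • z₀) := by
  obtain ⟨K, hK⟩ := exists_three_mul_card_le_card_mul_inv hG
  obtain ⟨d, hdK, hd, hcard⟩ := exists_isToeplitzAlong_two_le_card
    (isSubgroupBased_returnFilter hequi z₀) (fun g ↦ eventually_returnFilter_ne hfree) hK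
  have : Nonempty K := ⟨⟨d 1, hdK 1⟩⟩
  obtain ⟨m, hm⟩ : ∃ m, Fintype.card (K × Bool) = m + 2 := Nat.exists_eq_add_of_le' (by
    rw [Fintype.card_prod, Fintype.card_bool]
    exact Nat.le_mul_of_pos_left 2 Fintype.card_pos)
  let e := Fintype.equivFinOfCardEq hm
  have hdK' : IsToeplitzAlong (returnFilter G z₀) fun g ↦ (⟨d g, hdK g⟩ : K) := fun a ↦
    (hd a).mono fun _ h ↦ Subtype.ext h
  refine ⟨m, fun g ↦ e (⟨d g, hdK g⟩, ψ (g⁻¹ • z₀)), K, fun a ↦ (e.symm a).1, fun a ↦ (e.symm a).2,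
    (hdK'.prodMk (hψ.isToeplitzAlong hz₁)).comp e, fun h ↦ ?_, fun g ↦ ?_⟩
  · simpa only [Equiv.symm_apply_apply] using hcard h
  · simp only [Equiv.symm_apply_apply]

end Existence

/-- for a non-amenable residually finite countable group G and any minimal
equicontinuous Cantor system (Z,G) with a free orbit, there is a Toeplitz G-subshift
with no invariant Borel probability measures whose maximal equicontinuous factor is
(Z,G). -/
theorem stmt_19 {G Z : Type*} [Group G] [Countable G] [Infinite G]
    (hNA : ¬ HasInvariantMeasuresAll G)
    (hrf : ∀ g : G, g ≠ 1 → ∃ N : Subgroup G, N.Normal ∧ N.FiniteIndex ∧ g ∉ N)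
    [MetricSpace Z] [CompactSpace Z] [TotallyDisconnectedSpace Z] [Nonempty Z]
    [MulAction G Z]
    (hperfZ : ∀ z : Z, ¬ IsOpen ({z} : Set Z))
    (hcZ : ∀ g : G, Continuous fun z : Z => g • z)
    (hminZ : ∀ z : Z, Dense (MulAction.orbit G z))
    (hequi : Equicontinuous fun g : G => fun z : Z => g • z)
    (hfree : ∃ z : Z, ∀ g : G, g • z = z → g = 1) :
    ∃ (m : ℕ) (x : G → Fin (m + 2)), IsToeplitz x ∧
      -- the Toeplitz subshift has no invariant probability measures
      (¬ ∃ μ : Measure (G → Fin (m + 2)), IsProbabilityMeasure μ ∧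
        μ (orbitClosure x) = 1 ∧ ∀ g : G, Measure.map (shiftAct g) μ = μ) ∧
      -- it is an almost one-to-one extension of (Z,G) ...
      ∃ π : (G → Fin (m + 2)) → Z,
        ContinuousOn π (orbitClosure x) ∧
        Set.SurjOn π (orbitClosure x) Set.univ ∧
        (∀ g : G, ∀ y ∈ orbitClosure x, π (shiftAct g y) = g • π y) ∧
        Dense {z : Z | ∃! y : G → Fin (m + 2), y ∈ orbitClosure x ∧ π y = z} ∧
        -- ... and (Z,G) is its maximal equicontinuous factor: every factor map from the
        -- subshift onto an equicontinuous system factors through π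
        (∀ (W : Type) [MetricSpace W] [CompactSpace W] (act : G → W → W),
          (∀ g : G, Continuous (act g)) → act 1 = id →
          (∀ g h : G, act (g * h) = act g ∘ act h) →
          Equicontinuous act →
          ∀ q : (G → Fin (m + 2)) → W, ContinuousOn q (orbitClosure x) →
            Set.SurjOn q (orbitClosure x) Set.univ →
            (∀ g : G, ∀ y ∈ orbitClosure x, q (shiftAct g y) = act g (q y)) →
            ∃ r : Z → W, Continuous r ∧ Function.Surjective r ∧
              (∀ (g : G) (z : Z), r (g • z) = act g (r z)) ∧
              ∀ y ∈ orbitClosure x, r (π y) = q y) := by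
  classical
  have : ContinuousConstSMul G Z := ⟨hcZ⟩
  have : MulAction.IsMinimal G Z := ⟨hminZ⟩
  have : PerfectSpace Z := perfectSpace_iff_forall_not_isolated.2 fun z ↦
    ⟨mt (isOpen_singleton_iff_punctured_nhds z).2 (hperfZ z)⟩
  obtain ⟨z₀, hz₀⟩ := hfree
  obtain ⟨z₁, hz₁⟩ := exists_forall_smul_ne (G := G) z₀
  obtain ⟨ψ, hψ⟩ := exists_isSplitting (z₁ := z₁)
  obtain ⟨m, x, K, κ, c, hx, hκ, hc⟩ := exists_isToeplitzAlong_returnFilter hNA hequi hz₀ hψ hz₁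
  obtain ⟨π, x₀, hπ, hx₀⟩ := hx.exists_isFactorMap hψ hequi hc
  obtain ⟨hcont, hsurj, hsmul⟩ := isFactorMap_comp_val_iff.1 hπ
  refine ⟨m, x, hx.isToeplitz (isSubgroupBased_returnFilter hequi z₀)
    fun Γ ↦ finiteIndex_of_mem_returnFilter, not_exists_invariant_measure_orbitClosure hκ,
    π, hcont, hsurj, hsmul, dense_setOf_existsUnique_orbitClosure hπ hx₀, ?_⟩
  intro W _ _ act _ hone hmul hact q hqcont hqsurj hqact
  let := mulActionOfComp act hone hmul
  have hq : IsFactorMap G fun y : orbitClosure x ↦ q y :=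
    isFactorMap_comp_val_iff.2 ⟨hqcont, hqsurj, hqact⟩
  obtain ⟨r, hr, hrπ⟩ := hπ.exists_comp_eq hx₀ hact hq
  exact ⟨r, hr.continuous, hr.surjective, hr.map_smul, fun y hy ↦ hrπ ⟨y, hy⟩⟩
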